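/- arXiv:1402.1588 — 3 statements merged into one kernel-verified Lean document; each statement's English description precedes it below -/
import Mathlib

section
/- Let Λ be an artin algebra and a an idempotent element of Λ. Then for every finitely generated projective Λ-module P, the projective dimension of aP as a module over aΛa is at most the projective dimension of aΛ over aΛa; and for every finitely generated injective Λ-module I, the injective dimension of aI over aΛa is at most the projective dimension of Λa as a right aΛa-module. -/
/-! Both parts reduce a module to finite powers of one module. A finitely generated projective `P` is a
retract of some `Λ ^ k`, so `aP` is a retract of `(aΛ) ^ k`.

For the second part, let `X* = Hom_ℤ(X, ℚ/ℤ)` denote the Pontryagin dual (`PDual`), which exchanges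
left and right modules. It is exact and sends projectives to injectives, so the injective dimension
of `X*` is at most the projective dimension of `X` (`PDual.hasInjectiveDimensionLT`); in particular
this bounds the injective dimension of `(Λa)* ≅ a(Λ*)` (`cornerDual`). Since `Λ*` is a cogenerator
and a finitely generated `Λ`-module is artinian, `I` embeds in a finite power of `Λ*`
(`exists_injective_pow`). By injectivity of `I` this embedding splits, so `aI` is a retract of
`(a(Λ*)) ^ k`. Using `ℚ/ℤ` in place of an injective `R₀`-module avoids any choice of duality for
the artin algebra.
-/


/-!
STATEMENT 2: Let `Λ` be an artin algebra and `a` an idempotent element of `Λ`.  Then for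
every finitely generated projective `Λ`-module `P`, the projective dimension of `aP` as
a module over `aΛa` is at most the projective dimension of `aΛ` over `aΛa`; and for
every finitely generated injective `Λ`-module `I`, the injective dimension of `aI` over
`aΛa` is at most the projective dimension of `Λa` as a right `aΛa`-module.

The corner ring `aΛa` is realised as the subtype `{x : Λ // a * x * a = x}` with
identity `a`, and `aM = {m : M // a • m = m}` is its module.  Right `aΛa`-modules are
left modules over the corner ring of `Λᵐᵒᵖ` at `op a`; in particular `Λa` is
`CornerMod (op a) Λᵐᵒᵖ`.  The inequality `pd aP ≤ pd aΛ` is expressed by: for every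
`n : ℕ`, if `pd aΛ ≤ n` then `pd aP ≤ n`, where `pd X ≤ n` (resp. `id X ≤ n`) means
vanishing of `Ext^i(X,-)` (resp. `Ext^i(-,X)`) for `i > n`.
-/

universe u

section CornerRing

variable {Λ : Type u} [Ring Λ]

lemma corner_left {a : Λ} (ha : IsIdempotentElem a) {x : Λ}
    (hx : a * x * a = x) : a * x = x := by
  conv_lhs => rw [← hx]
  rw [← mul_assoc, ← mul_assoc, ha.eq, hx]

lemma corner_right {a : Λ} (ha : IsIdempotentElem a) {x : Λ}
    (hx : a * x * a = x) : x * a = x := by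
  conv_lhs => rw [← hx]
  rw [mul_assoc, ha.eq, hx]

variable (a : Λ) [Fact (IsIdempotentElem a)]

/-- The corner (non-unital) subring `aΛa` of `Λ` determined by an idempotent `a`. -/
def cornerSubring : NonUnitalSubring Λ where
  carrier := {x | a * x * a = x}
  zero_mem' := by simp
  add_mem' {x y} hx hy := by
    simp only [Set.mem_setOf_eq] at *
    rw [mul_add, add_mul, hx, hy]
  neg_mem' {x} hx := by
    simp only [Set.mem_setOf_eq] at *
    rw [mul_neg, neg_mul, hx]
  mul_mem' {x y} hx hy := by
    simp only [Set.mem_setOf_eq] at *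
    have hx' := corner_left (Fact.out : IsIdempotentElem a) hx
    have hy' := corner_right (Fact.out : IsIdempotentElem a) hy
    rw [← mul_assoc a x y, hx', mul_assoc x y a, hy']

/-- The corner ring `aΛa` (unital, with identity `a`). -/
def Corner : Type u := cornerSubring a

instance : NonUnitalRing (Corner a) :=
  inferInstanceAs (NonUnitalRing (cornerSubring a))

noncomputable instance : Ring (Corner a) :=
  { (inferInstance : NonUnitalRing (Corner a)) with
    one := ⟨a, by
      show a * a * a = a
      rw [(Fact.out : IsIdempotentElem a).eq, (Fact.out : IsIdempotentElem a).eq]⟩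
    one_mul := fun x => Subtype.ext (corner_left Fact.out x.2)
    mul_one := fun x => Subtype.ext (corner_right Fact.out x.2) }

variable (M : Type u) [AddCommGroup M] [Module Λ M]

/-- The additive subgroup `aM` of a `Λ`-module `M`. -/
def cornerModSub : AddSubgroup M where
  carrier := {m | a • m = m}
  zero_mem' := by simp
  add_mem' {x y} hx hy := by
    simp only [Set.mem_setOf_eq, smul_add] at *
    rw [hx, hy]
  neg_mem' {x} hx := by
    simp only [Set.mem_setOf_eq, smul_neg] at *
    rw [hx]

/-- `aM`, the corner module of `M`, as a module over the corner ring `aΛa`. -/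
def CornerMod : Type u := cornerModSub a M

instance : AddCommGroup (CornerMod a M) :=
  inferInstanceAs (AddCommGroup (cornerModSub a M))

instance : Module (Corner a) (CornerMod a M) where
  smul r m := ⟨r.1 • m.1, by
    show a • (r.1 • m.1) = r.1 • m.1
    rw [← mul_smul, corner_left Fact.out r.2]⟩
  one_smul m := Subtype.ext m.2
  mul_smul r s m := Subtype.ext (mul_smul r.1 s.1 m.1)
  smul_zero r := Subtype.ext (smul_zero r.1)
  smul_add r m n := Subtype.ext (smul_add r.1 m.1 n.1)
  add_smul r s m := Subtype.ext (add_smul r.1 s.1 m.1)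
  zero_smul m := Subtype.ext (zero_smul Λ m.1)

instance : Fact (IsIdempotentElem (MulOpposite.op a)) :=
  ⟨congrArg MulOpposite.op (Fact.out : IsIdempotentElem a).eq⟩

end CornerRing


open CategoryTheory

universe w

/-- `X` has projective dimension at most `n`: `Ext^i(X, -) = 0` for `i > n`. -/
def pdLE {R : Type u} [Ring R] [HasExt.{w} (ModuleCat.{u} R)]
    (X : ModuleCat.{u} R) (n : ℕ) : Prop :=
  ∀ (i : ℕ), n < i → ∀ (Y : ModuleCat.{u} R), Subsingleton (Abelian.Ext X Y i)

/-- `X` has injective dimension at most `n`: `Ext^i(-, X) = 0` for `i > n`. -/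
def idLE {R : Type u} [Ring R] [HasExt.{w} (ModuleCat.{u} R)]
    (X : ModuleCat.{u} R) (n : ℕ) : Prop :=
  ∀ (i : ℕ), n < i → ∀ (Y : ModuleCat.{u} R), Subsingleton (Abelian.Ext Y X i)

open Limits MulOpposite

/-! ### Pontryagin duality over noncommutative rings -/

section Duality

/-- The Pontryagin dual `Hom_ℤ(X, ℚ/ℤ)` of an `S`-module `X`, regarded as a module over a ring `R`
identified with the opposite ring of `S` by `e`: the element `r` acts by
`(r • f) x = f (s • x)`, where `e r = op s`. -/
def PDual {R S : Type u} [Ring R] [Ring S] (_e : R ≃+* Sᵐᵒᵖ) (X : Type u) [AddCommGroup X]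
    [Module S X] : Type u := X →+ AddCircle (1 : ℚ)

variable {R S : Type u} [Ring R] [Ring S] (e : R ≃+* Sᵐᵒᵖ)

namespace PDual

section

variable {X : Type u} [AddCommGroup X] [Module S X]

instance : AddCommGroup (PDual e X) := inferInstanceAs (AddCommGroup (X →+ AddCircle (1 : ℚ)))

instance : FunLike (PDual e X) X (AddCircle (1 : ℚ)) :=
  inferInstanceAs (FunLike (X →+ AddCircle (1 : ℚ)) X (AddCircle (1 : ℚ)))

instance : AddMonoidHomClass (PDual e X) X (AddCircle (1 : ℚ)) :=
  inferInstanceAs (AddMonoidHomClass (X →+ AddCircle (1 : ℚ)) X (AddCircle (1 : ℚ)))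

variable {e}

@[ext] lemma ext {f g : PDual e X} (h : ∀ x, f x = g x) : f = g := DFunLike.ext _ _ h

@[simp] lemma add_apply (f g : PDual e X) (x : X) : (f + g) x = f x + g x := rfl

@[simp] lemma zero_apply (x : X) : (0 : PDual e X) x = 0 := rfl

variable (e) in
/-- An additive character, as an element of the Pontryagin dual. -/
def mk (f : X →+ AddCircle (1 : ℚ)) : PDual e X := f

@[simp] lemma mk_apply (f : X →+ AddCircle (1 : ℚ)) (x : X) : mk e f x = f x := rfl

instance : Module R (PDual e X) where
  smul r f := mk e ((f : X →+ AddCircle (1 : ℚ)).comp (DistribSMul.toAddMonoidHom X (unop (e r))))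
  one_smul f := by
    ext x
    show f (unop (e 1) • x) = f x
    simp
  mul_smul r s f := by
    ext x
    show f (unop (e (r * s)) • x) = f (unop (e s) • unop (e r) • x)
    simp [mul_smul]
  smul_zero r := rfl
  smul_add r f g := rfl
  add_smul r s f := by
    ext x
    show f (unop (e (r + s)) • x) = f (unop (e r) • x) + f (unop (e s) • x)
    simp [add_smul]
  zero_smul f := by
    ext x
    show f (unop (e 0) • x) = 0
    simp

@[simp] lemma smul_apply (r : R) (f : PDual e X) (x : X) : (r • f) x = f (unop (e r) • x) := rfl

end

section

variable {X Y : Type u} [AddCommGroup X] [Module S X] [AddCommGroup Y] [Module S Y]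

/-- The transpose of a linear map. -/
def map (g : X →ₗ[S] Y) : PDual e Y →ₗ[R] PDual e X where
  toFun f := mk e ((f : Y →+ AddCircle (1 : ℚ)).comp g.toAddMonoidHom)
  map_add' _ _ := rfl
  map_smul' r f := by
    ext x
    show f (unop (e r) • g x) = f (g (unop (e r) • x))
    simp

@[simp] lemma map_apply (g : X →ₗ[S] Y) (f : PDual e Y) (x : X) : map e g f x = f (g x) := rfl

/-- Characters extend along injections because `ℚ/ℤ` is divisible. -/
lemma map_surjective (g : X →ₗ[S] Y) (hg : Function.Injective g) :
    Function.Surjective (map e g) := by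
  intro f
  obtain ⟨c, hc⟩ := CharacterModule.dual_surjective_of_injective
    (g.toAddMonoidHom.toIntLinearMap) hg (f : X →+ AddCircle (1 : ℚ))
  exact ⟨mk e c, ext fun x => DFunLike.congr_fun hc x⟩

lemma map_injective (g : X →ₗ[S] Y) (hg : Function.Surjective g) :
    Function.Injective (map e g) := by
  intro f f' h
  ext y
  obtain ⟨x, rfl⟩ := hg y
  exact DFunLike.congr_fun h x

/-- A character of the middle term of an exact sequence that vanishes on the image of `X` descends
to `Z`. -/
lemma map_exact {Z : Type u} [AddCommGroup Z] [Module S Z] (g : X →ₗ[S] Y) (h : Y →ₗ[S] Z)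
    (hgh : Function.Exact g h) (hh : Function.Surjective h) :
    Function.Exact (map e h) (map e g) := by
  intro f
  constructor
  · intro hf
    have hker : h.toAddMonoidHom.ker ≤ (f : Y →+ AddCircle (1 : ℚ)).ker := by
      intro y hy
      obtain ⟨x, rfl⟩ := (hgh y).1 hy
      exact DFunLike.congr_fun hf x
    refine ⟨mk e (h.toAddMonoidHom.liftOfSurjective hh ⟨_, hker⟩), ext fun y => ?_⟩
    exact AddMonoidHom.liftOfRightInverse_comp_apply _ _ (Function.rightInverse_surjInv hh) ⟨_, hker⟩ y
  · rintro ⟨f, rfl⟩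
    ext x
    simp [hgh.apply_apply_eq_zero x]

end

/-- The adjunction isomorphism `Hom_R(A, X*) ≅ Hom_S(X, A*)` turns an extension problem along
`A ↪ B` into a lifting problem along the surjection `B* → A*`. -/
lemma injective (X : Type u) [AddCommGroup X] [Module S X] [Module.Projective S X] :
    Module.Injective R (PDual e X) where
  out A B _ _ _ _ f hf g := by
    let e' : S ≃+* Rᵐᵒᵖ := (RingEquiv.opOp S).trans (RingEquiv.op e.symm)
    have he' (s : S) : unop (e' s) = e.symm (op s) := rfl
    let g' : X →ₗ[S] PDual e' A :=
      { toFun x := mk e' { toFun α := g α x, map_zero' := by simp, map_add' := by simp }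
        map_add' x y := by ext α; simp
        map_smul' s x := by ext α; simp [he'] }
    obtain ⟨l, hl⟩ := Module.projective_lifting_property (map e' f) g' (map_surjective e' f hf)
    refine ⟨{ toFun b := mk e { toFun x := l x b, map_zero' := by simp, map_add' := by simp }
              map_add' x y := by ext α; simp
              map_smul' r b := by
                ext x
                have : unop (e' (unop (e r))) = r := by simp [he']
                simp [this] }, fun α => ?_⟩
    ext x
    exact DFunLike.congr_fun (LinearMap.congr_fun hl x) α

/-- Duality exchanges projective and injective dimension: a projective presentation of `X`
dualizes to an injective copresentation of `X*`. -/
lemma hasInjectiveDimensionLT (n : ℕ) (X : Type u) [AddCommGroup X] [Module S X]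
    (h : HasProjectiveDimensionLT (ModuleCat.of S X) (n + 1)) :
    HasInjectiveDimensionLT (ModuleCat.of R (PDual e X)) (n + 1) := by
  induction n generalizing X with
  | zero =>
    have : Module.Projective S X :=
      (IsProjective.iff_projective (R := S) X).2 inferInstance
    have := injective e X
    have := Module.injective_object_of_injective_module R (PDual e X)
    infer_instance
  | succ n ih =>
    let p : (X →₀ S) →ₗ[S] X := Finsupp.linearCombination S id
    have hp : Function.Surjective p := Finsupp.linearCombination_id_surjective S X
    let K : Submodule S (X →₀ S) := LinearMap.ker p
    have hex : Function.Exact K.subtype p := LinearMap.exact_subtype_ker_map p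
    let T : ShortComplex (ModuleCat.{u} S) :=
      ModuleCat.shortComplexOfCompEqZero (R := S) (M := K) K.subtype p hex.linearMap_comp_eq_zero
    have hT : T.ShortExact :=
      ModuleCat.shortComplex_shortExact T hex K.injective_subtype hp
    have hF : Projective T.X₂ :=
      (IsProjective.iff_projective (R := S) (X →₀ S)).1 inferInstance
    have hK : HasProjectiveDimensionLT (ModuleCat.of S K) (n + 1) :=
      hT.hasProjectiveDimensionLT_X₁ (n + 1) inferInstance h
    have hex' : Function.Exact (map e p) (map e (X := K) K.subtype) := map_exact e (X := K) K.subtype p hex hp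
    let T' : ShortComplex (ModuleCat.{u} R) :=
      ModuleCat.shortComplexOfCompEqZero (map e p) (map e (X := K) K.subtype) hex'.linearMap_comp_eq_zero
    have hT' : T'.ShortExact :=
      ModuleCat.shortComplex_shortExact T' hex' (map_injective e p hp)
        (map_surjective e (X := K) K.subtype K.injective_subtype)
    have hF' : Injective T'.X₂ := by
      have := injective e (X →₀ S)
      exact Module.injective_object_of_injective_module R (PDual e (X →₀ S))
    exact hT'.hasInjectiveDimensionLT_X₁ (n + 1) (ih K hK) inferInstance

end PDual

end Duality

/-! ### Homological dimensions of finite powers -/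

section Powers

variable {R : Type u} [Ring R]

/-- A module retract, as a retract in the category of modules. -/
def moduleRetract {M N : Type u} [AddCommGroup M] [Module R M] [AddCommGroup N] [Module R N]
    (i : M →ₗ[R] N) (r : N →ₗ[R] M) (h : r ∘ₗ i = LinearMap.id) :
    Retract (ModuleCat.of R M) (ModuleCat.of R N) where
  i := ModuleCat.ofHom i
  r := ModuleCat.ofHom r
  retract := by rw [← ModuleCat.ofHom_comp, h]; rfl

variable (M : Type u) [AddCommGroup M] [Module R M]

/-- `M ^ (k + 1) ≅ M ⊞ M ^ k`. -/
noncomputable def powSuccIso (k : ℕ) :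
    (ModuleCat.of R M ⊞ ModuleCat.of R (Fin k → M)) ≅ ModuleCat.of R (Fin (k + 1) → M) :=
  ModuleCat.biprodIsoProd _ _ ≪≫ (Fin.consLinearEquiv R (fun _ : Fin (k + 1) => M)).toModuleIso

lemma hasProjectiveDimensionLT_pow (n k : ℕ) (h : HasProjectiveDimensionLT (ModuleCat.of R M) n) :
    HasProjectiveDimensionLT (ModuleCat.of R (Fin k → M)) n := by
  induction k with
  | zero =>
    have := (ModuleCat.isZero_of_subsingleton
      (ModuleCat.of R (Fin 0 → M))).hasProjectiveDimensionLT_zero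
    exact hasProjectiveDimensionLT_of_ge _ 0 n n.zero_le
  | succ k ih => exact hasProjectiveDimensionLT_of_iso (powSuccIso M k) n

lemma hasInjectiveDimensionLT_pow (n k : ℕ) (h : HasInjectiveDimensionLT (ModuleCat.of R M) n) :
    HasInjectiveDimensionLT (ModuleCat.of R (Fin k → M)) n := by
  induction k with
  | zero =>
    have := (ModuleCat.isZero_of_subsingleton
      (ModuleCat.of R (Fin 0 → M))).hasInjectiveDimensionLT_zero
    exact hasInjectiveDimensionLT_of_ge _ 0 n n.zero_le
  | succ k ih => exact hasInjectiveDimensionLT_of_iso (powSuccIso M k) n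

end Powers

/-! ### The functor `M ↦ aM` -/

section CornerFunctor

variable {Λ : Type u} [Ring Λ] (a : Λ) [Fact (IsIdempotentElem a)]
variable {M N : Type u} [AddCommGroup M] [Module Λ M] [AddCommGroup N] [Module Λ N]

/-- The functor `M ↦ aM` on morphisms. -/
def cornerMap (f : M →ₗ[Λ] N) : CornerMod a M →ₗ[Corner a] CornerMod a N where
  toFun m := ⟨f m.1, by
    show a • f m.1 = f m.1
    rw [← map_smul]
    exact congrArg f m.2⟩
  map_add' x y := Subtype.ext (map_add f x.1 y.1)
  map_smul' r x := Subtype.ext (map_smul f r.1 x.1)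

/-- `a(M ^ k) ≅ (aM) ^ k`. -/
def cornerPow (k : ℕ) : CornerMod a (Fin k → M) ≃ₗ[Corner a] (Fin k → CornerMod a M) where
  toFun m j := ⟨m.1 j, congrFun m.2 j⟩
  invFun g := ⟨fun j => (g j).1, funext fun j => (g j).2⟩
  map_add' _ _ := rfl
  map_smul' _ _ := rfl
  left_inv _ := rfl
  right_inv _ := rfl

/-- The functor `M ↦ aM` preserves retracts of finite powers. -/
noncomputable def cornerRetract (k : ℕ) (i : M →ₗ[Λ] (Fin k → N)) (r : (Fin k → N) →ₗ[Λ] M)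
    (h : r ∘ₗ i = LinearMap.id) :
    Retract (ModuleCat.of (Corner a) (CornerMod a M))
      (ModuleCat.of (Corner a) (Fin k → CornerMod a N)) :=
  moduleRetract ((cornerPow a k).toLinearMap ∘ₗ cornerMap a i)
    (cornerMap a r ∘ₗ (cornerPow a k).symm.toLinearMap)
    (LinearMap.ext fun m => Subtype.ext (LinearMap.congr_fun h m.1))

/-- The identification of `aΛa` with the opposite of the corner ring of `Λᵐᵒᵖ` at `op a`. -/
def cornerOp : Corner a ≃+* (Corner (op a))ᵐᵒᵖ where
  toFun x := op ⟨op x.1, by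
    show op a * op x.1 * op a = op x.1
    rw [← op_mul, ← op_mul, ← mul_assoc]
    exact congrArg op x.2⟩
  invFun y := ⟨unop (unop y).1, by
    have h : op a * (unop y).1 * op a = (unop y).1 := (unop y).2
    show a * unop (unop y).1 * a = unop (unop y).1
    rw [mul_assoc]
    exact congrArg unop h⟩
  map_add' _ _ := rfl
  map_mul' _ _ := rfl
  left_inv _ := rfl
  right_inv _ := rfl

variable (X : Type u) [AddCommGroup X] [Module Λᵐᵒᵖ X]

/-- `a(X*) ≅ (Xa)*` for a right `Λ`-module `X`: a character fixed by `a` is determined by its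
restriction to `Xa`. -/
noncomputable def cornerDual : CornerMod a (PDual (RingEquiv.opOp Λ) X) ≃ₗ[Corner a]
    PDual (cornerOp a) (CornerMod (op a) X) where
  toFun f := PDual.mk _ { toFun x := f.1 x.1, map_zero' := map_zero f.1,
                          map_add' x y := map_add f.1 x.1 y.1 }
  invFun g := ⟨PDual.mk _
    { toFun x := g ⟨op a • x, by
        show op a • op a • x = op a • x
        rw [← mul_smul, (Fact.out : IsIdempotentElem (op a)).eq]⟩
      map_zero' := (congrArg g (Subtype.ext (smul_zero (op a)))).trans (map_zero g)
      map_add' x y := (congrArg g (Subtype.ext (smul_add (op a) x y))).trans (map_add g _ _) }, by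
    refine PDual.ext fun x => congrArg g (Subtype.ext ?_)
    show op a • op a • x = op a • x
    rw [← mul_smul, (Fact.out : IsIdempotentElem (op a)).eq]⟩
  map_add' _ _ := rfl
  map_smul' _ _ := rfl
  left_inv f := Subtype.ext (PDual.ext fun x => DFunLike.congr_fun f.2 x)
  right_inv g := PDual.ext fun x => congrArg g (Subtype.ext x.2)

end CornerFunctor

/-! ### Embedding artinian modules in powers of `Λ*` -/

section Cogenerator

variable {Λ : Type u} [Ring Λ] {M : Type u} [AddCommGroup M] [Module Λ M]

/-- The `Λ`-linear map `M → Λ*` attached to a character of `M`. -/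
def charHom (c : CharacterModule M) : M →ₗ[Λ] PDual (RingEquiv.opOp Λ) Λᵐᵒᵖ where
  toFun m := PDual.mk _ { toFun y := c (unop y • m), map_zero' := by simp
                          map_add' x y := by simp [add_smul] }
  map_add' m m' := by ext y; simp
  map_smul' r m := by
    ext y
    show c (unop y • r • m) = c ((unop y * r) • m)
    rw [mul_smul]

lemma charHom_apply_one (c : CharacterModule M) (m : M) : charHom (Λ := Λ) c m 1 = c m :=
  congrArg c (one_smul Λ m)

/-- `Λ*` is a cogenerator, and in an artinian module finitely many of the kernels of the maps to
`Λ*` already intersect in zero. -/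
lemma exists_injective_pow (Λ M : Type u) [Ring Λ] [AddCommGroup M] [Module Λ M]
    [IsArtinian Λ M] :
    ∃ (k : ℕ) (i : M →ₗ[Λ] (Fin k → PDual (RingEquiv.opOp Λ) Λᵐᵒᵖ)), Function.Injective i := by
  obtain ⟨t, ht⟩ := Finset.exists_inf_le
    (fun c : CharacterModule M => LinearMap.ker (charHom (Λ := Λ) c))
  refine ⟨t.card, LinearMap.pi fun j => charHom (t.equivFin.symm j).1, ?_⟩
  rw [injective_iff_map_eq_zero]
  intro m hm
  have hmem : m ∈ t.inf fun c : CharacterModule M => LinearMap.ker (charHom (Λ := Λ) c) := by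
    rw [Submodule.mem_finsetInf]
    intro c hc
    simpa using congrFun hm (t.equivFin ⟨c, hc⟩)
  refine CharacterModule.eq_zero_of_character_apply fun c => ?_
  rw [← charHom_apply_one (Λ := Λ), LinearMap.mem_ker.1 (ht c hmem)]
  rfl

end Cogenerator

/-! ### Homological dimensions as classes -/

lemma pdLE_iff {R : Type u} [Ring R] [HasExt.{w} (ModuleCat.{u} R)] (X : ModuleCat.{u} R) (n : ℕ) :
    pdLE.{u, w} X n ↔ HasProjectiveDimensionLT X (n + 1) :=
  ⟨fun h => HasProjectiveDimensionLT.mk fun i hi Y _ => (h i hi Y).elim _ _,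
    fun _ i hi Y => HasProjectiveDimensionLT.subsingleton X (n + 1) i hi Y⟩

lemma idLE_iff {R : Type u} [Ring R] [HasExt.{w} (ModuleCat.{u} R)] (X : ModuleCat.{u} R) (n : ℕ) :
    idLE.{u, w} X n ↔ HasInjectiveDimensionLT X (n + 1) :=
  ⟨fun h => HasInjectiveDimensionLT.mk fun i hi Y _ => (h i hi Y).elim _ _,
    fun _ i hi Y => HasInjectiveDimensionLT.subsingleton X (n + 1) i hi Y⟩

theorem stmt_2 {R₀ : Type u} [CommRing R₀] [IsArtinianRing R₀]
    {Λ : Type u} [Ring Λ] [Algebra R₀ Λ] [Module.Finite R₀ Λ]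
    (a : Λ) [Fact (IsIdempotentElem a)]
    [HasExt.{w} (ModuleCat.{u} (Corner a))]
    [HasExt.{w} (ModuleCat.{u} (Corner (MulOpposite.op a)))] :
    -- (i) `pd_{aΛa} (aP) ≤ pd_{aΛa} (aΛ)` for every f.g. projective `Λ`-module `P`:
    ((∀ (P : Type u) [AddCommGroup P] [Module Λ P]
        [Module.Projective Λ P] [Module.Finite Λ P] (n : ℕ),
      pdLE.{u, w} (ModuleCat.of (Corner a) (CornerMod a Λ)) n →
      pdLE.{u, w} (ModuleCat.of (Corner a) (CornerMod a P)) n) ∧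
    -- (ii) `id_{aΛa} (aI) ≤ pd_{(aΛa)ᵒᵖ} (Λa)` for every f.g. injective `Λ`-module `I`:
     (∀ (I : Type u) [AddCommGroup I] [Module Λ I]
        [Module.Injective Λ I] [Module.Finite Λ I] (n : ℕ),
      pdLE.{u, w} (ModuleCat.of (Corner (MulOpposite.op a))
        (CornerMod (MulOpposite.op a) Λᵐᵒᵖ)) n →
      idLE.{u, w} (ModuleCat.of (Corner a) (CornerMod a I)) n)) := by
  constructor
  · intro P _ _ _ _ n h
    rw [pdLE_iff] at h ⊢
    obtain ⟨k, r, i, -, -, hri⟩ := Module.Finite.exists_comp_eq_id_of_projective Λ P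
    have := hasProjectiveDimensionLT_pow _ (n + 1) k h
    exact (cornerRetract a k i r hri).hasProjectiveDimensionLT (n + 1)
  · intro I _ _ _ _ n h
    rw [pdLE_iff] at h
    rw [idLE_iff]
    have : IsArtinianRing Λ := isArtinian_of_tower R₀ (inferInstance : IsArtinian R₀ Λ)
    have : IsArtinian Λ I := isArtinian_of_fg_of_artinian'
    obtain ⟨k, i, hi⟩ := exists_injective_pow Λ I
    obtain ⟨r, hr⟩ := Module.Injective.out i hi LinearMap.id
    -- the injective dimension of `a(Λ*) ≅ (Λa)*` is bounded by the duality
    have := PDual.hasInjectiveDimensionLT (cornerOp a) n _ h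
    have := hasInjectiveDimensionLT_of_iso (cornerDual a Λᵐᵒᵖ).symm.toModuleIso (n + 1)
    have := hasInjectiveDimensionLT_pow _ (n + 1) k this
    exact (cornerRetract a k i r (LinearMap.ext hr)).hasInjectiveDimensionLT (n + 1)
end

section
/- Let R and M be nonnegatively graded rings with a graded ring homomorphism θ : R → M, making M a graded left R-module, and similarly R', M' with θ' : R' → M'. Assume R_0 and R'_0 are noetherian, each R_i (resp. R'_i) is finitely generated as left and right R_0-module (resp. R'_0-module), and each M_i (resp. M'_i) is finitely generated as left R_0-module (resp. R'_0-module). Suppose for some n ≥ 0 there are graded rng isomorphisms φ : R_{≥n} → R'_{≥n} and ψ : M_{≥n} → M'_{≥n} with ψ ∘ θ_{≥n} = θ'_{≥n} ∘ φ. Then R is noetherian and M is a finitely generated left R-module if and only if R' is noetherian and M' is a finitely generated left R'-module. -/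
/-!
STATEMENT 8: Let `R`, `M` be nonnegatively graded rings with a graded ring homomorphism
`θ : R → M` (making `M` a graded left `R`-module via `r · m = θ(r) m`), and similarly
`R'`, `M'`, `θ'`.  Assume `R₀`, `R'₀` are noetherian, each `Rᵢ` (resp. `R'ᵢ`) is
finitely generated as a left and right `R₀`-module (resp. `R'₀`), and each `Mᵢ`
(resp. `M'ᵢ`) is finitely generated as a left `R₀`-module (resp. `R'₀`-module).
Suppose for some `n ≥ 0` there are graded rng isomorphisms `φ : R_{≥n} → R'_{≥n}` and
`ψ : M_{≥n} → M'_{≥n}` with `ψ ∘ θ_{≥n} = θ'_{≥n} ∘ φ`.  Then `R` is noetherian and `M`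
is a finitely generated left `R`-module iff `R'` is noetherian and `M'` is a finitely
generated left `R'`-module.

Finite generation is encoded concretely by finite sets of generators, and left
`R`-module structures via `θ`.
-/

open DirectSum

universe u v u' v'

/-- `𝒜 i` is finitely generated as a left module over `𝒜 0`. -/
def PieceFGLeft {R : Type u} [Ring R] (𝒜 : ℕ → AddSubgroup R) (i : ℕ) : Prop :=
  ∃ s : Finset R, (↑s : Set R) ⊆ (𝒜 i : Set R) ∧
    ∀ x ∈ 𝒜 i, x ∈ AddSubgroup.closure {y | ∃ r ∈ 𝒜 0, ∃ t ∈ s, y = r * t}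

/-- `𝒜 i` is finitely generated as a right module over `𝒜 0`. -/
def PieceFGRight {R : Type u} [Ring R] (𝒜 : ℕ → AddSubgroup R) (i : ℕ) : Prop :=
  ∃ s : Finset R, (↑s : Set R) ⊆ (𝒜 i : Set R) ∧
    ∀ x ∈ 𝒜 i, x ∈ AddSubgroup.closure {y | ∃ r ∈ 𝒜 0, ∃ t ∈ s, y = t * r}

/-- `ℳ i` is finitely generated as a left module over `𝒜 0`, the module structure being
induced by the ring homomorphism `θ`. -/
def PieceFGLeftOver {R : Type u} {M : Type v} [Ring R] [Ring M]
    (𝒜 : ℕ → AddSubgroup R) (ℳ : ℕ → AddSubgroup M) (θ : R →+* M) (i : ℕ) : Prop :=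
  ∃ s : Finset M, (↑s : Set M) ⊆ (ℳ i : Set M) ∧
    ∀ x ∈ ℳ i, x ∈ AddSubgroup.closure {y | ∃ r ∈ 𝒜 0, ∃ t ∈ s, y = θ r * t}

/-- `M` is finitely generated as a left `R`-module, the module structure being induced
by the ring homomorphism `θ`. -/
def ModuleFGOver {R : Type u} {M : Type v} [Ring R] [Ring M] (θ : R →+* M) : Prop :=
  ∃ s : Finset M, ∀ m : M, m ∈ AddSubgroup.closure {y | ∃ r : R, ∃ t ∈ s, y = θ r * t}

/-!
Three modules are at stake: `R` over `R`, `R` over `Rᵐᵒᵖ`, and `M` over `R`.  Since `M` is finitely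
generated over a left noetherian `R` iff it is noetherian, it suffices to treat one graded module
`N` over `S` and to show that being noetherian only depends on the degrees `≥ n`.

The property that is transported is `BoundedlyGenerated`: for every choice of subgroups
`L m ≤ N_m` there is a `d` such that every `L m` with `m > d` lies in `∑_{j ≤ d} S_{m-j} L_j`.

* If `N` is noetherian, this holds: the submodules generated by `⋃_{j ≤ k} L j` stabilize, and one
  takes homogeneous components (`exists_bound_of_isNoetherian`).
* If `m ≥ d + n`, all the coefficients used above lie in `S_{≥ n}`, so the property passes through
  an isomorphism in degrees `≥ n`, after enlarging `d` to `d + n` (`BoundedlyGenerated.transfer`).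
* Conversely, let `I` be a submodule of `N` and let `L m` be the group of degree `m` leading terms
  of the elements of `I` of degree at most `m`.  The elements of `I` of degree `≤ d` lie in a
  finitely generated module over the noetherian ring `S₀`, so finitely many elements of `I`
  generate them; by descending on the leading term these generate `I`
  (`BoundedlyGenerated.isNoetherian`).
-/

/-- Every family of subgroups `L m ≤ 𝒩 m` of the graded module `N` is generated over `S` in bounded
degrees, in the sense that `L m ⊆ ∑_{i + j = m, j ≤ d} 𝒮 i • L j` for all `m > d`.  The groups
`L m` are not required to form a submodule. -/
def BoundedlyGenerated {S : Type*} {N : Type*} [Ring S] [AddCommGroup N] [Module S N]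
    (𝒮 : ℕ → AddSubgroup S) (𝒩 : ℕ → AddSubgroup N) : Prop :=
  ∀ L : ℕ → AddSubgroup N, (∀ m, L m ≤ 𝒩 m) → ∃ d, ∀ m, d < m → ∀ x ∈ L m,
    x ∈ AddSubgroup.closure
      {z | ∃ i j, i + j = m ∧ j ≤ d ∧ ∃ s ∈ 𝒮 i, ∃ y ∈ L j, z = s • y}

/-! ### Noetherian graded modules and bounded generation -/

theorem coe_decompose_neg {N : Type*} [AddCommGroup N] (𝒩 : ℕ → AddSubgroup N)
    [DirectSum.Decomposition 𝒩] (w : N) (k : ℕ) :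
    (DirectSum.decompose 𝒩 (-w) k : N) = -(DirectSum.decompose 𝒩 w k : N) := by
  rw [DirectSum.decompose_neg]
  rfl

section Graded

variable {S : Type*} {N : Type*} [Ring S] [AddCommGroup N] [Module S N]
  (𝒮 : ℕ → AddSubgroup S) (𝒩 : ℕ → AddSubgroup N) [DirectSum.Decomposition 𝒩]

theorem decompose_homogeneous_smul
    (hsmul : ∀ i j, ∀ s ∈ 𝒮 i, ∀ y ∈ 𝒩 j, s • y ∈ 𝒩 (i + j))
    {i : ℕ} {s : S} (hs : s ∈ 𝒮 i) (w : N) (j : ℕ) :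
    (DirectSum.decompose 𝒩 (s • w) (i + j) : N) = s • (DirectSum.decompose 𝒩 w j : N) := by
  induction w using DirectSum.Decomposition.inductionOn 𝒩 with
  | zero => simp
  | @homogeneous k y =>
    have h := hsmul i k s hs y y.2
    by_cases hk : k = j
    · subst hk
      rw [DirectSum.decompose_of_mem_same 𝒩 h, DirectSum.decompose_of_mem_same 𝒩 y.2]
    · rw [DirectSum.decompose_of_mem_ne 𝒩 h (by omega), DirectSum.decompose_of_mem_ne 𝒩 y.2 hk,
        smul_zero]
  | add a b ha hb =>
    simp only [smul_add, DirectSum.decompose_add, DirectSum.add_apply, AddSubgroup.coe_add, ha, hb]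

/-- In a noetherian graded module, each family of subgroups of the graded pieces is generated in
bounded degrees. -/
theorem exists_bound_of_isNoetherian [IsNoetherian S N]
    (hgen : ∀ s : S, s ∈ ⨆ i, 𝒮 i)
    (hsmul : ∀ i j, ∀ s ∈ 𝒮 i, ∀ y ∈ 𝒩 j, s • y ∈ 𝒩 (i + j)) :
    BoundedlyGenerated 𝒮 𝒩 := by
  intro L hL
  let U : ℕ →o Submodule S N :=
    { toFun := fun k => Submodule.span S {y | ∃ j ≤ k, y ∈ L j}
      monotone' := fun a b hab => Submodule.span_mono fun y ⟨j, hj, hy⟩ => ⟨j, hj.trans hab, hy⟩ }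
  obtain ⟨d, hd⟩ := monotone_stabilizes_iff_noetherian.mpr ‹IsNoetherian S N› U
  refine ⟨d, fun m hm x hx => ?_⟩
  have hxU : x ∈ Submodule.span S {y | ∃ j ≤ d, y ∈ L j} := by
    change x ∈ U d
    rw [hd m hm.le]
    exact Submodule.subset_span ⟨m, le_rfl, hx⟩
  set C : ℕ → AddSubgroup N := fun m => AddSubgroup.closure
      {z | ∃ i j, i + j = m ∧ j ≤ d ∧ ∃ s ∈ 𝒮 i, ∃ y ∈ L j, z = s • y} with hC
  -- Multiplying a generator by an arbitrary scalar, split into homogeneous parts.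
  have key : ∀ s : S, ∀ j ≤ d, ∀ y ∈ L j, ∀ m, (DirectSum.decompose 𝒩 (s • y) m : N) ∈ C m := by
    intro s j hj y hy m
    refine AddSubgroup.iSup_induction 𝒮
      (C := fun s => (DirectSum.decompose 𝒩 (s • y) m : N) ∈ C m) (hgen s) ?_ ?_ ?_
    · intro i t ht
      have h := hsmul i j t ht y (hL j hy)
      by_cases hm : i + j = m
      · subst hm
        rw [DirectSum.decompose_of_mem_same 𝒩 h]
        exact AddSubgroup.subset_closure ⟨i, j, rfl, hj, t, ht, y, hy, rfl⟩
      · rw [DirectSum.decompose_of_mem_ne 𝒩 h hm]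
        exact zero_mem _
    · simp
    · intro a b ha hb
      simpa only [add_smul, DirectSum.decompose_add, DirectSum.add_apply, AddSubgroup.coe_add]
        using add_mem ha hb
  have hall : (DirectSum.decompose 𝒩 x m : N) ∈ C m := by
    have hx' : x ∈ (Submodule.span S {y | ∃ j ≤ d, y ∈ L j}).toAddSubmonoid := hxU
    clear hx hxU
    rw [Submodule.span_eq_closure] at hx'
    induction hx' using AddSubmonoid.closure_induction with
    | mem z hz =>
      obtain ⟨s, -, y, ⟨j, hj, hy⟩, rfl⟩ := Set.mem_smul.mp hz
      exact key s j hj y hy m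
    | zero => simp
    | add a b _ _ ha hb =>
      simpa only [DirectSum.decompose_add, DirectSum.add_apply, AddSubgroup.coe_add]
        using add_mem ha hb
  rwa [DirectSum.decompose_of_mem_same 𝒩 (hL m hx)] at hall

variable {𝒮 𝒩}

/-- A boundedly generated graded module with pieces finitely generated over a noetherian ring `S₀`
is noetherian.  The ring `S₀` may act through any map to `S`, which is all that `h0` says. -/
theorem BoundedlyGenerated.isNoetherian {S₀ : Type*} [Ring S₀] [IsNoetherianRing S₀] [Module S₀ N]
    (hB : BoundedlyGenerated 𝒮 𝒩)
    (h0 : ∀ a : S₀, ∃ s : S, ∀ x : N, a • x = s • x)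
    (hfg : ∀ i, ∃ t : Finset N, ∀ x ∈ 𝒩 i, x ∈ Submodule.span S₀ (t : Set N))
    (hsmul : ∀ i j, ∀ s ∈ 𝒮 i, ∀ y ∈ 𝒩 j, s • y ∈ 𝒩 (i + j)) :
    IsNoetherian S N := by
  classical
  refine ⟨fun I => ?_⟩
  -- The leading terms in degree `k` of the elements of `I` of degree at most `k`.
  let L : ℕ → AddSubgroup N := fun k =>
    { carrier := {x | ∃ w ∈ I, (DirectSum.decompose 𝒩 w k : N) = x ∧
        ∀ p, k < p → (DirectSum.decompose 𝒩 w p : N) = 0}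
      zero_mem' := ⟨0, zero_mem _, by simp, by simp⟩
      add_mem' := by
        rintro _ _ ⟨w, hw, rfl, hw'⟩ ⟨v, hv, rfl, hv'⟩
        exact ⟨w + v, add_mem hw hv, by simp, fun p hp => by simp [hw' p hp, hv' p hp]⟩
      neg_mem' := by
        rintro _ ⟨w, hw, rfl, hw'⟩
        exact ⟨-w, neg_mem hw, by rw [coe_decompose_neg],
          fun p hp => by rw [coe_decompose_neg, hw' p hp, neg_zero]⟩ }
  obtain ⟨d, hd⟩ := hB L (by
    rintro m _ ⟨w, -, rfl, -⟩
    exact (DirectSum.decompose 𝒩 w m).2)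
  choose t ht using hfg
  let T : Finset N := (Finset.range (d + 1)).biUnion t
  let P : Submodule S₀ N := Submodule.span S₀ (T : Set N)
  have hP : ∀ y : N, (∀ p, d < p → (DirectSum.decompose 𝒩 y p : N) = 0) → y ∈ P := by
    intro y hy
    rw [← DirectSum.sum_support_decompose 𝒩 y]
    refine sum_mem fun p _ => ?_
    by_cases hp : d < p
    · rw [hy p hp]; exact zero_mem _
    · refine Submodule.span_mono ?_ (ht p _ (DirectSum.decompose 𝒩 y p).2)
      intro z hz
      exact Finset.mem_coe.mpr (Finset.mem_biUnion.mpr ⟨p, Finset.mem_range.mpr (by omega), hz⟩)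
  let I₀ : Submodule S₀ N :=
    { carrier := I
      zero_mem' := zero_mem I
      add_mem' := fun ha hb => add_mem ha hb
      smul_mem' := fun a x hx => by
        obtain ⟨s, hs⟩ := h0 a
        rw [hs]
        exact I.smul_mem s hx }
  have : IsNoetherian S₀ P := isNoetherian_of_fg_of_noetherian P ⟨T, rfl⟩
  obtain ⟨F, hF⟩ : (P ⊓ I₀).FG := by
    have h := isNoetherian_of_le (s := P ⊓ I₀) (t := P) inf_le_left
    exact (isNoetherian_submodule.mp h) _ le_rfl
  have hFI : Submodule.span S (F : Set N) ≤ I := by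
    rw [Submodule.span_le]
    intro z hz
    have : z ∈ P ⊓ I₀ := hF ▸ Submodule.subset_span hz
    exact this.2
  have hlow : ∀ y ∈ I, (∀ p, d < p → (DirectSum.decompose 𝒩 y p : N) = 0) →
      y ∈ Submodule.span S (F : Set N) := by
    intro y hy hdeg
    have hy' : y ∈ Submodule.span S₀ (F : Set N) := by
      rw [hF]; exact ⟨hP y hdeg, hy⟩
    clear hdeg hy
    induction hy' using Submodule.span_induction with
    | mem z hz => exact Submodule.subset_span hz
    | zero => exact zero_mem _
    | add a b _ _ ha hb => exact add_mem ha hb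
    | smul a x _ hx =>
      obtain ⟨s, hs⟩ := h0 a
      rw [hs]
      exact Submodule.smul_mem _ s hx
  refine ⟨F, le_antisymm hFI fun y hy => ?_⟩
  have main : ∀ k, ∀ y ∈ I, (∀ p, k ≤ p → (DirectSum.decompose 𝒩 y p : N) = 0) →
      y ∈ Submodule.span S (F : Set N) := by
    intro k
    induction k with
    | zero => exact fun y hy h => hlow y hy fun p _ => h p (Nat.zero_le p)
    | succ k ih =>
      intro y hy hdeg
      by_cases hk : d < k
      · have hlead := hd k hk (DirectSum.decompose 𝒩 y k : N) ⟨y, hy, rfl, fun p hp => hdeg p hp⟩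
        have lift : ∀ x ∈ AddSubgroup.closure
            {z | ∃ i j, i + j = k ∧ j ≤ d ∧ ∃ s ∈ 𝒮 i, ∃ y ∈ L j, z = s • y},
            ∃ w ∈ Submodule.span S (F : Set N), (DirectSum.decompose 𝒩 w k : N) = x ∧
              ∀ p, k < p → (DirectSum.decompose 𝒩 w p : N) = 0 := by
          intro x hx
          induction hx using AddSubgroup.closure_induction with
          | mem z hz =>
            obtain ⟨i, j, rfl, hj, s, hs, _, ⟨w, hw, rfl, hw'⟩, rfl⟩ := hz
            refine ⟨s • w, Submodule.smul_mem _ _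
              (hlow w hw fun p hp => hw' p (by omega)),
              decompose_homogeneous_smul 𝒮 𝒩 hsmul hs w j, fun p hp => ?_⟩
            obtain ⟨q, rfl⟩ : ∃ q, p = i + q := ⟨p - i, by omega⟩
            rw [decompose_homogeneous_smul 𝒮 𝒩 hsmul hs w q, hw' q (by omega), smul_zero]
          | zero => exact ⟨0, zero_mem _, by simp, by simp⟩
          | add a b _ _ ha hb =>
            obtain ⟨w, hw, rfl, hw'⟩ := ha
            obtain ⟨v, hv, rfl, hv'⟩ := hb
            exact ⟨w + v, add_mem hw hv, by simp, fun p hp => by simp [hw' p hp, hv' p hp]⟩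
          | neg a _ ha =>
            obtain ⟨w, hw, rfl, hw'⟩ := ha
            exact ⟨-w, neg_mem hw, by rw [coe_decompose_neg],
              fun p hp => by rw [coe_decompose_neg, hw' p hp, neg_zero]⟩
        obtain ⟨w, hw, hwk, hw'⟩ := lift _ hlead
        have hsub : y - w ∈ Submodule.span S (F : Set N) := by
          refine ih _ (sub_mem hy (hFI hw)) fun p hp => ?_
          rcases hp.eq_or_lt with rfl | hp
          · simp [DirectSum.decompose_sub, hwk]
          · simp [DirectSum.decompose_sub, hdeg p hp, hw' p hp]
        simpa using add_mem hsub hw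
      · exact hlow y hy fun p hp => hdeg p (by omega)
  refine main ((DirectSum.decompose 𝒩 y).support.sup id + 1) y hy fun p hp => ?_
  by_contra hne
  have hmem : p ∈ (DirectSum.decompose 𝒩 y).support := by
    rw [DFinsupp.mem_support_iff]
    exact fun h => hne (by rw [h]; rfl)
  have := Finset.le_sup (f := id) hmem
  simp only [id] at this
  omega

end Graded

/-! ### Comparing two graded modules in high degrees -/

/-- Bounded generation only depends on the graded module in degrees `≥ n`.  A family `L'` in `N'` is
pulled back to `N`, with zero put in the degrees below `n`. -/
theorem BoundedlyGenerated.transfer {S N S' N' : Type*} [Ring S] [AddCommGroup N] [Module S N]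
    [Ring S'] [AddCommGroup N'] [Module S' N']
    {𝒮 : ℕ → AddSubgroup S} {𝒩 : ℕ → AddSubgroup N}
    {𝒮' : ℕ → AddSubgroup S'} {𝒩' : ℕ → AddSubgroup N'}
    (n : ℕ) (ν : ∀ i, n ≤ i → (𝒩 i ≃+ 𝒩' i))
    (hν : ∀ i, n ≤ i → ∀ s ∈ 𝒮 i, ∃ s' ∈ 𝒮' i, ∀ j (hj : n ≤ j) (y : 𝒩 j),
      ∃ h : s • (y : N) ∈ 𝒩 (i + j),
        (ν (i + j) (hj.trans (Nat.le_add_left j i)) ⟨s • (y : N), h⟩ : N') = s' • (ν j hj y : N'))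
    (hB : BoundedlyGenerated 𝒮 𝒩) : BoundedlyGenerated 𝒮' 𝒩' := by
  intro L' hL'
  let L : ℕ → AddSubgroup N := fun m => if hm : n ≤ m then
    ((L' m).comap ((𝒩' m).subtype.comp (ν m hm).toAddMonoidHom)).map (𝒩 m).subtype else ⊥
  have hL : ∀ m (hm : n ≤ m) x, x ∈ L m ↔ ∃ y : 𝒩 m, (ν m hm y : N') ∈ L' m ∧ (y : N) = x := by
    intro m hm x
    simp [L, hm, AddSubgroup.mem_map]
  have hL0 : ∀ m, ¬ n ≤ m → ∀ x ∈ L m, x = 0 := by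
    intro m hm x hx
    simpa [L, hm] using hx
  obtain ⟨d, hd⟩ := hB L (by
    intro m x hx
    by_cases hm : n ≤ m
    · obtain ⟨y, -, rfl⟩ := (hL m hm x).mp hx
      exact y.2
    · rw [hL0 m hm x hx]; exact zero_mem _)
  refine ⟨d + n, fun m hm x' hx' => ?_⟩
  have hnm : n ≤ m := by omega
  set C' := AddSubgroup.closure
      {z | ∃ i j, i + j = m ∧ j ≤ d + n ∧ ∃ s ∈ 𝒮' i, ∃ y ∈ L' j, z = s • y} with hC'
  let x : 𝒩 m := (ν m hnm).symm ⟨x', hL' m hx'⟩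
  have hνx : (ν m hnm x : N') = x' := by simp [x]
  have hx := hd m (by omega) x ((hL m hnm _).mpr ⟨x, by rwa [hνx], rfl⟩)
  let D := (C'.comap ((𝒩' m).subtype.comp (ν m hnm).toAddMonoidHom)).map (𝒩 m).subtype
  have hle : AddSubgroup.closure
      {z | ∃ i j, i + j = m ∧ j ≤ d ∧ ∃ s ∈ 𝒮 i, ∃ y ∈ L j, z = s • y} ≤ D := by
    rw [AddSubgroup.closure_le]
    rintro _ ⟨i, j, rfl, hj, s, hs, y, hy, rfl⟩
    by_cases hnj : n ≤ j
    · obtain ⟨s', hs', hmul⟩ := hν i (by omega) s hs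
      obtain ⟨y, hyL, rfl⟩ := (hL j hnj y).mp hy
      obtain ⟨h, heq⟩ := hmul j hnj y
      refine ⟨⟨s • (y : N), h⟩, ?_, rfl⟩
      change (ν (i + j) _ ⟨s • (y : N), h⟩ : N') ∈ C'
      rw [heq]
      exact AddSubgroup.subset_closure ⟨i, j, rfl, by omega, s', hs', _, hyL, rfl⟩
    · rw [hL0 j hnj y hy, smul_zero]
      exact zero_mem _
  obtain ⟨y, hy, hyx⟩ := hle hx
  have : y = x := Subtype.ext hyx
  subst this
  rw [← hνx]
  exact hy

/-- A graded module whose pieces are finitely generated over a noetherian degree-zero ring is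
noetherian as soon as it agrees in degrees `≥ n` with a noetherian graded module. -/
theorem isNoetherian_of_tail {S N S' N' S₀ : Type*} [Ring S] [AddCommGroup N] [Module S N]
    [Ring S'] [AddCommGroup N'] [Module S' N'] [Ring S₀] [IsNoetherianRing S₀] [Module S₀ N']
    (𝒮 : ℕ → AddSubgroup S) (𝒩 : ℕ → AddSubgroup N) [DirectSum.Decomposition 𝒩]
    (𝒮' : ℕ → AddSubgroup S') (𝒩' : ℕ → AddSubgroup N') [DirectSum.Decomposition 𝒩']
    (hgen : ∀ s : S, s ∈ ⨆ i, 𝒮 i)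
    (hsmul : ∀ i j, ∀ s ∈ 𝒮 i, ∀ y ∈ 𝒩 j, s • y ∈ 𝒩 (i + j))
    (hsmul' : ∀ i j, ∀ s ∈ 𝒮' i, ∀ y ∈ 𝒩' j, s • y ∈ 𝒩' (i + j))
    (h0 : ∀ a : S₀, ∃ s : S', ∀ x : N', a • x = s • x)
    (hfg : ∀ i, ∃ t : Finset N', ∀ x ∈ 𝒩' i, x ∈ Submodule.span S₀ (t : Set N'))
    (n : ℕ) (ν : ∀ i, n ≤ i → (𝒩 i ≃+ 𝒩' i))
    (hν : ∀ i, n ≤ i → ∀ s ∈ 𝒮 i, ∃ s' ∈ 𝒮' i, ∀ j (hj : n ≤ j) (y : 𝒩 j),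
      ∃ h : s • (y : N) ∈ 𝒩 (i + j),
        (ν (i + j) (hj.trans (Nat.le_add_left j i)) ⟨s • (y : N), h⟩ : N') = s' • (ν j hj y : N'))
    (hN : IsNoetherian S N) : IsNoetherian S' N' :=
  ((exists_bound_of_isNoetherian 𝒮 𝒩 hgen hsmul).transfer n ν hν).isNoetherian h0 hfg hsmul'

/-! ### Application to `R` on both sides and to `M` -/

theorem mem_iSup_of_gradedRing {R : Type*} [Ring R] (𝒜 : ℕ → AddSubgroup R) [GradedRing 𝒜]
    (r : R) : r ∈ ⨆ i, 𝒜 i := by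
  classical
  rw [← DirectSum.sum_support_decompose 𝒜 r]
  exact sum_mem fun i _ => AddSubgroup.mem_iSup_of_mem i (DirectSum.decompose 𝒜 r i).2

/-- `R` with its right multiplication is noetherian over `Rᵐᵒᵖ` iff `Rᵐᵒᵖ` is left noetherian. -/
theorem isNoetherian_op_iff (R : Type*) [Ring R] : IsNoetherian Rᵐᵒᵖ R ↔ IsNoetherianRing Rᵐᵒᵖ := by
  let e : R ≃ₗ[Rᵐᵒᵖ] Rᵐᵒᵖ :=
    { MulOpposite.opAddEquiv with map_smul' := fun s x => by simp }
  exact ⟨fun h => isNoetherian_of_linearEquiv e, fun h => isNoetherian_of_linearEquiv e.symm⟩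

theorem moduleFGOver_iff {R M : Type*} [Ring R] [Ring M] (θ : R →+* M) :
    ModuleFGOver θ ↔ (letI := Module.compHom M θ; Module.Finite R M) := by
  let := Module.compHom M θ
  have key : ∀ (s : Finset M) (m : M), m ∈ Submodule.span R (s : Set M) ↔
      m ∈ AddSubgroup.closure {y | ∃ r : R, ∃ t ∈ s, y = θ r * t} := by
    intro s m
    constructor
    · intro h
      induction h using Submodule.closure_induction with
      | zero => exact zero_mem _
      | add a b _ _ ha hb => exact add_mem ha hb
      | smul_mem r x hx => exact AddSubgroup.subset_closure ⟨r, x, hx, rfl⟩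
    · intro h
      induction h using AddSubgroup.closure_induction with
      | mem x hx =>
        obtain ⟨r, t, ht, rfl⟩ := hx
        exact Submodule.smul_mem _ r (Submodule.subset_span ht)
      | zero => exact zero_mem _
      | add a b _ _ ha hb => exact add_mem ha hb
      | neg a _ ha => exact neg_mem ha
  constructor
  · rintro ⟨s, hs⟩
    exact ⟨⟨s, eq_top_iff.mpr fun m _ => (key s m).mpr (hs m)⟩⟩
  · rintro ⟨⟨s, hs⟩⟩
    exact ⟨s, fun m => (key s m).mp (hs ▸ Submodule.mem_top)⟩

/-- The inclusion of the degree-zero subring. -/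
def zeroIncl {R : Type*} [Ring R] (𝒜 : ℕ → AddSubgroup R) [GradedRing 𝒜] : 𝒜 0 →+* R where
  toFun x := x
  map_one' := rfl
  map_mul' _ _ := rfl
  map_zero' := rfl
  map_add' _ _ := rfl

/-- One implication of the equivalence; the hypotheses on the unprimed side that are only needed for
the converse are dropped. -/
theorem noetherian_forward {R M R' M' : Type*}
    [Ring R] [Ring M] [Ring R'] [Ring M']
    (𝒜 : ℕ → AddSubgroup R) [GradedRing 𝒜]
    (ℳ : ℕ → AddSubgroup M) [GradedRing ℳ]
    (𝒜' : ℕ → AddSubgroup R') [GradedRing 𝒜']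
    (ℳ' : ℕ → AddSubgroup M') [GradedRing ℳ']
    (θ : R →+* M) (hθ : ∀ i, ∀ x ∈ 𝒜 i, θ x ∈ ℳ i)
    (θ' : R' →+* M') (hθ' : ∀ i, ∀ x ∈ 𝒜' i, θ' x ∈ ℳ' i)
    (hR'0 : IsNoetherianRing (𝒜' 0) ∧ IsNoetherianRing (𝒜' 0)ᵐᵒᵖ)
    (hR'fg : ∀ i, PieceFGLeft 𝒜' i ∧ PieceFGRight 𝒜' i)
    (hM'fg : ∀ i, PieceFGLeftOver 𝒜' ℳ' θ' i)
    (n : ℕ)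
    (φ : ∀ i, n ≤ i → ((𝒜 i) ≃+ (𝒜' i)))
    (hφ : ∀ (i j : ℕ) (hi : n ≤ i) (hj : n ≤ j) (x : 𝒜 i) (y : 𝒜 j),
      (φ (i + j) (le_trans hi (Nat.le_add_right i j))
          ⟨(x : R) * (y : R), SetLike.mul_mem_graded x.2 y.2⟩ : R') =
        (φ i hi x : R') * (φ j hj y : R'))
    (ψ : ∀ i, n ≤ i → ((ℳ i) ≃+ (ℳ' i)))
    (hψ : ∀ (i j : ℕ) (hi : n ≤ i) (hj : n ≤ j) (x : ℳ i) (y : ℳ j),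
      (ψ (i + j) (le_trans hi (Nat.le_add_right i j))
          ⟨(x : M) * (y : M), SetLike.mul_mem_graded x.2 y.2⟩ : M') =
        (ψ i hi x : M') * (ψ j hj y : M'))
    (hsq : ∀ (i : ℕ) (hi : n ≤ i) (x : 𝒜 i),
      (ψ i hi ⟨θ (x : R), hθ i _ x.2⟩ : M') = θ' (φ i hi x : R'))
    (h : (IsNoetherianRing R ∧ IsNoetherianRing Rᵐᵒᵖ) ∧ ModuleFGOver θ) :
    (IsNoetherianRing R' ∧ IsNoetherianRing R'ᵐᵒᵖ) ∧ ModuleFGOver θ' := by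
  obtain ⟨⟨hl, hr⟩, hm⟩ := h
  obtain ⟨h0l, h0r⟩ := hR'0
  have hl' : IsNoetherianRing R' := by
    let _ : Module (𝒜' 0) R' := Module.compHom R' (zeroIncl 𝒜')
    refine isNoetherian_of_tail (S := R) (N := R) (S' := R') (N' := R') (S₀ := 𝒜' 0) 𝒜 𝒜 𝒜' 𝒜'
      (mem_iSup_of_gradedRing 𝒜)
      (fun i j s hs y hy => SetLike.mul_mem_graded hs hy)
      (fun i j s hs y hy => SetLike.mul_mem_graded hs hy)
      (fun a => ⟨(a : R'), fun x => rfl⟩) (fun i => ?_) n φ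
      (fun i hi s hs => ⟨_, (φ i hi ⟨s, hs⟩).2, fun j hj y =>
        ⟨SetLike.mul_mem_graded hs y.2, hφ i j hi hj ⟨s, hs⟩ y⟩⟩) hl
    obtain ⟨t, -, ht⟩ := (hR'fg i).1
    refine ⟨t, fun x hx => ?_⟩
    have hle : AddSubgroup.closure {y | ∃ r ∈ 𝒜' 0, ∃ u ∈ t, y = r * u} ≤
        (Submodule.span (𝒜' 0) (t : Set R')).toAddSubgroup := by
      rw [AddSubgroup.closure_le]
      rintro _ ⟨r, hr, u, hu, rfl⟩
      exact Submodule.smul_mem _ (⟨r, hr⟩ : 𝒜' 0) (Submodule.subset_span hu)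
    exact hle (ht x hx)
  have hr' : IsNoetherianRing R'ᵐᵒᵖ := by
    rw [← isNoetherian_op_iff] at hr ⊢
    let _ : Module (𝒜' 0)ᵐᵒᵖ R' := Module.compHom R' (zeroIncl 𝒜').op
    let op𝒜 : ℕ → AddSubgroup Rᵐᵒᵖ := fun i =>
      (𝒜 i).map (MulOpposite.opAddEquiv : R ≃+ Rᵐᵒᵖ).toAddMonoidHom
    let op𝒜' : ℕ → AddSubgroup R'ᵐᵒᵖ := fun i =>
      (𝒜' i).map (MulOpposite.opAddEquiv : R' ≃+ R'ᵐᵒᵖ).toAddMonoidHom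
    refine isNoetherian_of_tail (S := Rᵐᵒᵖ) (N := R) (S' := R'ᵐᵒᵖ) (N' := R') (S₀ := (𝒜' 0)ᵐᵒᵖ)
      op𝒜 𝒜 op𝒜' 𝒜' ?_ ?_ ?_
      (fun a => ⟨MulOpposite.op (a.unop : R'), fun x => rfl⟩) (fun i => ?_) n φ ?_ hr
    · intro s
      rw [← AddSubgroup.map_iSup]
      exact ⟨s.unop, mem_iSup_of_gradedRing 𝒜 _, rfl⟩
    · rintro i j _ ⟨s, hs, rfl⟩ y hy
      rw [add_comm]
      exact SetLike.mul_mem_graded hy hs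
    · rintro i j _ ⟨s, hs, rfl⟩ y hy
      rw [add_comm]
      exact SetLike.mul_mem_graded hy hs
    · obtain ⟨t, -, ht⟩ := (hR'fg i).2
      refine ⟨t, fun x hx => ?_⟩
      have hle : AddSubgroup.closure {y | ∃ r ∈ 𝒜' 0, ∃ u ∈ t, y = u * r} ≤
          (Submodule.span (𝒜' 0)ᵐᵒᵖ (t : Set R')).toAddSubgroup := by
        rw [AddSubgroup.closure_le]
        rintro _ ⟨r, hr, u, hu, rfl⟩
        exact Submodule.smul_mem _ (MulOpposite.op (⟨r, hr⟩ : 𝒜' 0)) (Submodule.subset_span hu)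
      exact hle (ht x hx)
    · rintro i hi _ ⟨s, hs, rfl⟩
      refine ⟨_, ⟨_, (φ i hi ⟨s, hs⟩).2, rfl⟩, fun j hj y => ?_⟩
      -- The right action turns degrees `i + j` into `j + i`; `φ` is moved across this equality.
      have hcomm : ∀ (k l : ℕ) (hkl : k = l) (hk : n ≤ k) (z : R) (hz : z ∈ 𝒜 k),
          ∃ hz' : z ∈ 𝒜 l, (φ l (hkl ▸ hk) ⟨z, hz'⟩ : R') = φ k hk ⟨z, hz⟩ := by
        rintro k _ rfl hk z hz
        exact ⟨hz, rfl⟩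
      obtain ⟨h1, h2⟩ := hcomm (j + i) (i + j) (add_comm j i) (by omega) ((y : R) * s)
        (SetLike.mul_mem_graded y.2 hs)
      exact ⟨h1, h2.trans (hφ j i hj hi y ⟨s, hs⟩)⟩
  refine ⟨⟨hl', hr'⟩, ?_⟩
  rw [moduleFGOver_iff] at hm ⊢
  let _ : Module R M := Module.compHom M θ
  let _ : Module R' M' := Module.compHom M' θ'
  let _ : Module (𝒜' 0) M' := Module.compHom M' (θ'.comp (zeroIncl 𝒜'))
  have hM : IsNoetherian R M := by
    have : Module.Finite R M := hm
    exact isNoetherian_of_isNoetherianRing_of_finite R M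
  have hM' : IsNoetherian R' M' := by
    refine isNoetherian_of_tail (S := R) (N := M) (S' := R') (N' := M') (S₀ := 𝒜' 0) 𝒜 ℳ 𝒜' ℳ'
      (mem_iSup_of_gradedRing 𝒜)
      (fun i j s hs y hy => SetLike.mul_mem_graded (hθ i s hs) hy)
      (fun i j s hs y hy => SetLike.mul_mem_graded (hθ' i s hs) hy)
      (fun a => ⟨(a : R'), fun x => rfl⟩) (fun i => ?_) n ψ
      (fun i hi s hs => ⟨_, (φ i hi ⟨s, hs⟩).2, fun j hj y =>
        ⟨SetLike.mul_mem_graded (hθ i s hs) y.2, ?_⟩⟩) hM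
    · obtain ⟨t, -, ht⟩ := hM'fg i
      refine ⟨t, fun x hx => ?_⟩
      have hle : AddSubgroup.closure {y | ∃ r ∈ 𝒜' 0, ∃ u ∈ t, y = θ' r * u} ≤
          (Submodule.span (𝒜' 0) (t : Set M')).toAddSubgroup := by
        rw [AddSubgroup.closure_le]
        rintro _ ⟨r, hr, u, hu, rfl⟩
        exact Submodule.smul_mem _ (⟨r, hr⟩ : 𝒜' 0) (Submodule.subset_span hu)
      exact hle (ht x hx)
    · refine (hψ i j hi hj ⟨θ s, hθ i s hs⟩ y).trans ?_
      rw [hsq i hi ⟨s, hs⟩]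
      rfl
  exact inferInstanceAs (Module.Finite R' M')

theorem stmt_8 {R : Type u} {M : Type v} {R' : Type u'} {M' : Type v'}
    [Ring R] [Ring M] [Ring R'] [Ring M']
    (𝒜 : ℕ → AddSubgroup R) [GradedRing 𝒜]
    (ℳ : ℕ → AddSubgroup M) [GradedRing ℳ]
    (𝒜' : ℕ → AddSubgroup R') [GradedRing 𝒜']
    (ℳ' : ℕ → AddSubgroup M') [GradedRing ℳ']
    -- graded ring homomorphisms:
    (θ : R →+* M) (hθ : ∀ i, ∀ x ∈ 𝒜 i, θ x ∈ ℳ i)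
    (θ' : R' →+* M') (hθ' : ∀ i, ∀ x ∈ 𝒜' i, θ' x ∈ ℳ' i)
    -- degree-zero parts are noetherian:
    (hR0 : IsNoetherianRing (𝒜 0) ∧ IsNoetherianRing (𝒜 0)ᵐᵒᵖ)
    (hR'0 : IsNoetherianRing (𝒜' 0) ∧ IsNoetherianRing (𝒜' 0)ᵐᵒᵖ)
    -- graded pieces are finitely generated over the degree-zero part:
    (hRfg : ∀ i, PieceFGLeft 𝒜 i ∧ PieceFGRight 𝒜 i)
    (hR'fg : ∀ i, PieceFGLeft 𝒜' i ∧ PieceFGRight 𝒜' i)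
    (hMfg : ∀ i, PieceFGLeftOver 𝒜 ℳ θ i)
    (hM'fg : ∀ i, PieceFGLeftOver 𝒜' ℳ' θ' i)
    -- graded rng isomorphisms `φ : R_{≥n} ≅ R'_{≥n}` and `ψ : M_{≥n} ≅ M'_{≥n}`:
    (n : ℕ)
    (φ : ∀ i, n ≤ i → ((𝒜 i) ≃+ (𝒜' i)))
    (hφ : ∀ (i j : ℕ) (hi : n ≤ i) (hj : n ≤ j) (x : 𝒜 i) (y : 𝒜 j),
      (φ (i + j) (le_trans hi (Nat.le_add_right i j))
          ⟨(x : R) * (y : R), SetLike.mul_mem_graded x.2 y.2⟩ : R') =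
        (φ i hi x : R') * (φ j hj y : R'))
    (ψ : ∀ i, n ≤ i → ((ℳ i) ≃+ (ℳ' i)))
    (hψ : ∀ (i j : ℕ) (hi : n ≤ i) (hj : n ≤ j) (x : ℳ i) (y : ℳ j),
      (ψ (i + j) (le_trans hi (Nat.le_add_right i j))
          ⟨(x : M) * (y : M), SetLike.mul_mem_graded x.2 y.2⟩ : M') =
        (ψ i hi x : M') * (ψ j hj y : M'))
    -- the square `ψ ∘ θ_{≥n} = θ'_{≥n} ∘ φ` commutes:
    (hsq : ∀ (i : ℕ) (hi : n ≤ i) (x : 𝒜 i),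
      (ψ i hi ⟨θ (x : R), hθ i _ x.2⟩ : M') = θ' (φ i hi x : R')) :
    ((IsNoetherianRing R ∧ IsNoetherianRing Rᵐᵒᵖ) ∧ ModuleFGOver θ) ↔
      ((IsNoetherianRing R' ∧ IsNoetherianRing R'ᵐᵒᵖ) ∧ ModuleFGOver θ') := by
  have hφ' : ∀ (i j : ℕ) (hi : n ≤ i) (hj : n ≤ j) (x : 𝒜' i) (y : 𝒜' j),
      ((φ (i + j) (le_trans hi (Nat.le_add_right i j))).symm
          ⟨(x : R') * (y : R'), SetLike.mul_mem_graded x.2 y.2⟩ : R) =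
        ((φ i hi).symm x : R) * ((φ j hj).symm y : R) := by
    intro i j hi hj x y
    have h := hφ i j hi hj ((φ i hi).symm x) ((φ j hj).symm y)
    simp only [AddEquiv.apply_symm_apply] at h
    simp only [← h, Subtype.coe_eta, AddEquiv.symm_apply_apply]
  have hψ' : ∀ (i j : ℕ) (hi : n ≤ i) (hj : n ≤ j) (x : ℳ' i) (y : ℳ' j),
      ((ψ (i + j) (le_trans hi (Nat.le_add_right i j))).symm
          ⟨(x : M') * (y : M'), SetLike.mul_mem_graded x.2 y.2⟩ : M) =
        ((ψ i hi).symm x : M) * ((ψ j hj).symm y : M) := by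
    intro i j hi hj x y
    have h := hψ i j hi hj ((ψ i hi).symm x) ((ψ j hj).symm y)
    simp only [AddEquiv.apply_symm_apply] at h
    simp only [← h, Subtype.coe_eta, AddEquiv.symm_apply_apply]
  have hsq' : ∀ (i : ℕ) (hi : n ≤ i) (x : 𝒜' i),
      ((ψ i hi).symm ⟨θ' (x : R'), hθ' i _ x.2⟩ : M) = θ ((φ i hi).symm x : R) := by
    intro i hi x
    have h := hsq i hi ((φ i hi).symm x)
    simp only [AddEquiv.apply_symm_apply] at h
    simp only [← h, Subtype.coe_eta, AddEquiv.symm_apply_apply]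
  exact ⟨noetherian_forward 𝒜 ℳ 𝒜' ℳ' θ hθ θ' hθ' hR'0 hR'fg hM'fg n φ hφ ψ hψ hsq,
    noetherian_forward 𝒜' ℳ' 𝒜 ℳ θ' hθ' θ hθ hR0 hRfg hMfg n (fun i hi => (φ i hi).symm) hφ'
      (fun i hi => (ψ i hi).symm) hψ' hsq'⟩
end

section
/- Let R be a ring, e an idempotent of R, and let t be a nonnegative integer. Suppose that for all left R-modules M, N and all j > t the functor M ↦ eM induces isomorphisms Ext^j_R(M, N) ≅ Ext^j_{eRe}(eM, eN). Then: (α) every R/ReR-module has injective dimension at most t as an R-module; (β) for every projective R-module P, the eRe-module eP has projective dimension at most t; (γ) every R/ReR-module has projective dimension at most t as an R-module; and (δ) for every injective R-module I, the eRe-module eI has injective dimension at most t. -/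
/-!
Only the vanishing of the groups on one side of the given isomorphisms is needed.

If `e` annihilates `M`, then `eM = 0`, so all `Ext` groups over `eRe` into or out of `eM` vanish,
and therefore so do those over `R` in degrees above `t`; this gives (α) and (γ).

For (β) and (δ), every `eRe`-module `Y` is, up to isomorphism, of the form `eN`: take the
coinduced module `N = Hom_{eRe}(eR, Y)` (`cornerCoind`), for which evaluation at `e` is an
isomorphism `eN ≃ Y` (`cornerCoindEquiv`). Hence `Ext^j_{eRe}(eP, Y) ≅ Ext^j_R(P, N) = 0` for `P`
projective and `j > t`, and dually for `I` injective.
-/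

/-!
STATEMENT 17: Let `R` be a ring, `e` an idempotent of `R`, and `t ≥ 0`.  Suppose that
for all left `R`-modules `M`, `N` and all `j > t` the functor `M ↦ eM` induces
isomorphisms `Ext^j_R(M, N) ≅ Ext^j_{eRe}(eM, eN)`.  Then:
(α) every `R/ReR`-module (i.e. every `R`-module annihilated by `e`) has injective
dimension at most `t` as an `R`-module;
(β) for every projective `R`-module `P`, the `eRe`-module `eP` has projective dimension
at most `t`;
(γ) every `R/ReR`-module has projective dimension at most `t` as an `R`-module;
(δ) for every injective `R`-module `I`, the `eRe`-module `eI` has injective dimension at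
most `t`.

The corner ring `eRe` is realised as `{x : R // e * x * e = x}` with identity `e`, and
`eM = {m : M // e • m = m}`.  `R/ReR`-modules are exactly the `R`-modules `M` with
`e • m = 0` for all `m`.  `pd X ≤ t` (resp. `id X ≤ t`) is expressed by vanishing of
`Ext^i(X,-)` (resp. `Ext^i(-,X)`) for `i > t`.
-/

universe u

open CategoryTheory

universe w w2

section Coinduction

variable {Λ : Type u} [Ring Λ] (a : Λ) [Fact (IsIdempotentElem a)]

/-- Right multiplication by `r ∈ Λ` on `aΛ`, which is linear for the left action of `aΛa`. -/
def cornerMulRight (r : Λ) : CornerMod a Λ →ₗ[Corner a] CornerMod a Λ where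
  toFun x := ⟨x.1 * r, by
    have hx : a * x.1 = x.1 := x.2
    show a * (x.1 * r) = x.1 * r
    rw [← mul_assoc, hx]⟩
  map_add' x y := Subtype.ext (add_mul x.1 y.1 r)
  map_smul' c x := Subtype.ext (mul_assoc c.1 x.1 r)

/-- The `aΛa`-linear map `aΛ → aΛa`, `x ↦ xa`. -/
def cornerProj : CornerMod a Λ →ₗ[Corner a] Corner a where
  toFun x := ⟨x.1 * a, by
    have hx : a * x.1 = x.1 := x.2
    have ha : a * a = a := (Fact.out : IsIdempotentElem a)
    show a * (x.1 * a) * a = x.1 * a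
    rw [← mul_assoc, hx, mul_assoc, ha]⟩
  map_add' x y := Subtype.ext (add_mul x.1 y.1 a)
  map_smul' c x := Subtype.ext (mul_assoc c.1 x.1 a)

/-- The idempotent `a`, as an element of `aΛ`. -/
def cornerGen : CornerMod a Λ := ⟨a, (Fact.out : IsIdempotentElem a)⟩

lemma cornerProj_smul_gen (x : CornerMod a Λ) :
    cornerProj a x • cornerGen a = cornerMulRight a a x := by
  have ha : a * a = a := (Fact.out : IsIdempotentElem a)
  refine Subtype.ext ?_
  show x.1 * a * a = x.1 * a
  rw [mul_assoc, ha]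

lemma cornerProj_gen : cornerProj a (cornerGen a) = 1 :=
  Subtype.ext (Fact.out : IsIdempotentElem a)

lemma cornerProj_mulRight (x : CornerMod a Λ) :
    cornerProj a (cornerMulRight a a x) = cornerProj a x := by
  have ha : a * a = a := (Fact.out : IsIdempotentElem a)
  refine Subtype.ext ?_
  show x.1 * a * a = x.1 * a
  rw [mul_assoc, ha]

variable (Y : Type u) [AddCommGroup Y] [Module (Corner a) Y]

/-- The coinduced module `Hom_{aΛa}(aΛ, Y)`. It is a type synonym for the linear maps, so that its
`Λ`-action cannot be confused with a pointwise action on values. -/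
def cornerCoind : Type u := CornerMod a Λ →ₗ[Corner a] Y

noncomputable instance : AddCommGroup (cornerCoind a Y) :=
  inferInstanceAs (AddCommGroup (CornerMod a Λ →ₗ[Corner a] Y))

/-- `Λ` acts on `Hom_{aΛa}(aΛ, Y)` by `(r • f) x = f (x * r)`. -/
noncomputable instance : Module Λ (cornerCoind a Y) where
  smul r f := LinearMap.comp (show CornerMod a Λ →ₗ[Corner a] Y from f) (cornerMulRight a r)
  one_smul f := LinearMap.ext fun x =>
    congrArg (show CornerMod a Λ →ₗ[Corner a] Y from f) (Subtype.ext (mul_one x.1))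
  mul_smul r s f := LinearMap.ext fun x =>
    congrArg (show CornerMod a Λ →ₗ[Corner a] Y from f) (Subtype.ext (mul_assoc x.1 r s).symm)
  smul_zero r := LinearMap.ext fun x => rfl
  smul_add r f g := LinearMap.ext fun x => rfl
  add_smul r s f := LinearMap.ext fun x =>
    (congrArg (show CornerMod a Λ →ₗ[Corner a] Y from f)
      (Subtype.ext (mul_add x.1 r s))).trans
      (map_add (show CornerMod a Λ →ₗ[Corner a] Y from f) _ _)
  zero_smul f := LinearMap.ext fun x =>
    (congrArg (show CornerMod a Λ →ₗ[Corner a] Y from f)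
      (Subtype.ext (mul_zero x.1))).trans
      (map_zero (show CornerMod a Λ →ₗ[Corner a] Y from f))

/-- The linear map underlying an element of `a Hom_{aΛa}(aΛ, Y)`. -/
def cornerCoindHom (f : CornerMod a (cornerCoind a Y)) : CornerMod a Λ →ₗ[Corner a] Y := f.1

lemma cornerCoindHom_mulRight (f : CornerMod a (cornerCoind a Y)) (x : CornerMod a Λ) :
    cornerCoindHom a Y f (cornerMulRight a a x) = cornerCoindHom a Y f x :=
  LinearMap.congr_fun (f.2 : a • f.1 = f.1) x

/-- Evaluation at `a` is an isomorphism `a Hom_{aΛa}(aΛ, Y) ≃ Y`; its inverse sends `y` to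
`x ↦ (x * a) • y`. -/
noncomputable def cornerCoindEquiv : CornerMod a (cornerCoind a Y) ≃ₗ[Corner a] Y where
  toFun f := cornerCoindHom a Y f (cornerGen a)
  map_add' f g := rfl
  map_smul' c f := by
    have ha : a * c.1 = c.1 := corner_left Fact.out c.2
    have ha' : c.1 * a = c.1 := corner_right Fact.out c.2
    rw [RingHom.id_apply, ← map_smul]
    show cornerCoindHom a Y f (cornerMulRight a c.1 (cornerGen a)) = _
    congr 1
    refine Subtype.ext ?_
    show a * c.1 = c.1 * a
    rw [ha, ha']
  invFun y := ⟨(LinearMap.toSpanSingleton (Corner a) Y y).comp (cornerProj a),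
    LinearMap.ext fun x => congrArg (· • y) (cornerProj_mulRight a x)⟩
  left_inv f := by
    refine Subtype.ext (LinearMap.ext fun x => ?_)
    show cornerProj a x • cornerCoindHom a Y f (cornerGen a) = cornerCoindHom a Y f x
    rw [← map_smul, cornerProj_smul_gen, cornerCoindHom_mulRight]
  right_inv y := by
    show cornerProj a (cornerGen a) • y = y
    rw [cornerProj_gen, one_smul]

lemma cornerMod_isZero (M : ModuleCat.{u} Λ) (hM : ∀ m : M, a • m = 0) :
    Limits.IsZero (ModuleCat.of (Corner a) (CornerMod a M)) := by
  have : Subsingleton (CornerMod a M) := by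
    refine subsingleton_of_forall_eq 0 fun m => Subtype.ext ?_
    have hm : a • m.1 = m.1 := m.2
    show m.1 = 0
    rw [← hm, hM]
  exact ModuleCat.isZero_of_subsingleton _

end Coinduction

section ExtTransport

variable {C : Type*} [Category* C] [Abelian C] [HasExt.{w} C]

lemma ext_subsingleton_of_iso_right {X Y Y' : C} (φ : Y ≅ Y') (n : ℕ)
    [Subsingleton (Abelian.Ext X Y n)] : Subsingleton (Abelian.Ext X Y' n) := by
  refine subsingleton_of_forall_eq 0 fun x => ?_
  have h : (x.comp (Abelian.Ext.mk₀ φ.inv) (add_zero n)).comp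
      (Abelian.Ext.mk₀ φ.hom) (add_zero n) = x := by simp
  rw [← h, Subsingleton.elim (x.comp (Abelian.Ext.mk₀ φ.inv) (add_zero n)) 0,
    Abelian.Ext.zero_comp]

lemma ext_subsingleton_of_iso_left {X X' Y : C} (φ : X ≅ X') (n : ℕ)
    [Subsingleton (Abelian.Ext X Y n)] : Subsingleton (Abelian.Ext X' Y n) := by
  refine subsingleton_of_forall_eq 0 fun x => ?_
  have h : (Abelian.Ext.mk₀ φ.inv).comp
      ((Abelian.Ext.mk₀ φ.hom).comp x (zero_add n)) (zero_add n) = x := by simp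
  rw [← h, Subsingleton.elim ((Abelian.Ext.mk₀ φ.hom).comp x (zero_add n)) 0,
    Abelian.Ext.comp_zero]

lemma ext_subsingleton_of_isZero_right {X Y : C} (h : Limits.IsZero Y) (n : ℕ) :
    Subsingleton (Abelian.Ext X Y n) := by
  refine subsingleton_of_forall_eq 0 fun x => ?_
  rw [← x.comp_mk₀_id, h.eq_of_src (𝟙 Y) 0, Abelian.Ext.mk₀_zero, Abelian.Ext.comp_zero]

lemma ext_subsingleton_of_isZero_left {X Y : C} (h : Limits.IsZero X) (n : ℕ) :
    Subsingleton (Abelian.Ext X Y n) := by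
  refine subsingleton_of_forall_eq 0 fun x => ?_
  rw [← x.mk₀_id_comp, h.eq_of_src (𝟙 X) 0, Abelian.Ext.mk₀_zero, Abelian.Ext.zero_comp]

end ExtTransport

theorem stmt_17 {R : Type u} [Ring R] (e : R) [Fact (IsIdempotentElem e)]
    [HasExt.{w} (ModuleCat.{u} R)] [HasExt.{w2} (ModuleCat.{u} (Corner e))]
    (t : ℕ)
    (hiso : ∀ (M N : ModuleCat.{u} R) (j : ℕ), t < j →
      Nonempty (Abelian.Ext M N j ≃+
        Abelian.Ext (ModuleCat.of (Corner e) (CornerMod e M))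
          (ModuleCat.of (Corner e) (CornerMod e N)) j)) :
    -- (α)
    (∀ M : ModuleCat.{u} R, (∀ m : M, e • m = 0) → idLE.{u, w} M t) ∧
    -- (β)
    (∀ P : ModuleCat.{u} R, Projective P →
      pdLE.{u, w2} (ModuleCat.of (Corner e) (CornerMod e P)) t) ∧
    -- (γ)
    (∀ M : ModuleCat.{u} R, (∀ m : M, e • m = 0) → pdLE.{u, w} M t) ∧
    -- (δ)
    (∀ I : ModuleCat.{u} R, Injective I →
      idLE.{u, w2} (ModuleCat.of (Corner e) (CornerMod e I)) t) := by
  refine ⟨fun M hM i hi Y => ?_, fun P hP i hi Y => ?_, fun M hM i hi Y => ?_,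
    fun I hI i hi Y => ?_⟩
  · obtain ⟨φ⟩ := hiso Y M i hi
    have := ext_subsingleton_of_isZero_right (X := ModuleCat.of (Corner e) (CornerMod e Y))
      (cornerMod_isZero e M hM) i
    exact φ.toEquiv.subsingleton
  · obtain ⟨φ⟩ := hiso P (ModuleCat.of R (cornerCoind e Y)) i hi
    -- `i > t ≥ 0`, so the `Ext` group over `R` is in positive degree.
    obtain ⟨k, rfl⟩ : ∃ k, i = k + 1 := ⟨i - 1, by omega⟩
    have : Subsingleton (Abelian.Ext P (ModuleCat.of R (cornerCoind e Y)) (k + 1)) :=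
      subsingleton_of_forall_eq 0 fun x => x.eq_zero_of_projective
    have := φ.symm.toEquiv.subsingleton
    exact ext_subsingleton_of_iso_right (cornerCoindEquiv e Y).toModuleIso (k + 1)
  · obtain ⟨φ⟩ := hiso M Y i hi
    have := ext_subsingleton_of_isZero_left (Y := ModuleCat.of (Corner e) (CornerMod e Y))
      (cornerMod_isZero e M hM) i
    exact φ.toEquiv.subsingleton
  · obtain ⟨φ⟩ := hiso (ModuleCat.of R (cornerCoind e Y)) I i hi
    obtain ⟨k, rfl⟩ : ∃ k, i = k + 1 := ⟨i - 1, by omega⟩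
    have : Subsingleton (Abelian.Ext (ModuleCat.of R (cornerCoind e Y)) I (k + 1)) :=
      subsingleton_of_forall_eq 0 fun x => x.eq_zero_of_injective
    have := φ.symm.toEquiv.subsingleton
    exact ext_subsingleton_of_iso_left (cornerCoindEquiv e Y).toModuleIso (k + 1)
end
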